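/- arXiv:1611.06699 — 2 statements merged into one kernel-verified Lean document; each statement's English description precedes it below -/
import Mathlib

section
/- Let θ > 0, N ≥ 1 an integer, and let α, β be real numbers with 0 ≤ α < 1 and α < β ≤ α + 1. Set ω_j := {jβ} − {jα}. Then the variance of X_N^I under the Ewens measure of parameter θ on S_N satisfies ∑_{σ ∈ S_N} P_θ^{(N)}(σ) X_N^I(σ)² − (∑_{σ ∈ S_N} P_θ^{(N)}(σ) X_N^I(σ))² = θ ∑_{j=1}^N (ω_j²/j) Ψ_N(j) + θ² ∑_{1≤j,k≤N} (ω_j ω_k/(jk)) (Ψ_N(j+k)·1_{j+k≤N} − Ψ_N(j)Ψ_N(k)). -/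
open Finset

/-- `Ψ_N(j) = ∏_{i=0}^{j−1} (N−i)/(θ+N−1−i)`. -/
noncomputable def Psi (θ : ℝ) (n j : ℕ) : ℝ :=
  ∏ i ∈ Finset.range j, ((n : ℝ) - i) / (θ + (n : ℝ) - 1 - i)

/-- The number of `j`-cycles of a permutation of `{1,…,N}`, where fixed points
are counted as `1`-cycles. -/
def cycleCount (N : ℕ) (σ : Equiv.Perm (Fin N)) (j : ℕ) : ℕ :=
  if j = 1 then N - σ.support.card else σ.cycleType.count j

/-- The total number of cycles of `σ`, fixed points counted as `1`-cycles. -/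
def totalCycles (N : ℕ) (σ : Equiv.Perm (Fin N)) : ℕ :=
  Multiset.card σ.cycleType + (N - σ.support.card)

/-- The Ewens probability of parameter `θ` of the permutation `σ`:
`θ^{K(σ)} / (θ(θ+1)⋯(θ+N−1))`. -/
noncomputable def ewens (θ : ℝ) (N : ℕ) (σ : Equiv.Perm (Fin N)) : ℝ :=
  θ ^ totalCycles N σ / ∏ i ∈ Finset.range N, (θ + (i : ℝ))

/-- The number of eigenvalues of the permutation matrix of `σ` in the arc
`(e^{2iπα}, e^{2iπβ}]`: `X_N^I(σ) = ∑_{j=1}^N a_{N,j}(σ)(⌊jβ⌋ − ⌊jα⌋)`. -/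
noncomputable def XNI (N : ℕ) (α β : ℝ) (σ : Equiv.Perm (Fin N)) : ℝ :=
  ∑ j ∈ Finset.Icc 1 N,
    (cycleCount N σ j : ℝ) * ((⌊(j : ℝ) * β⌋ : ℝ) - (⌊(j : ℝ) * α⌋ : ℝ))


noncomputable def wt (θ : ℝ) (m : Multiset ℕ) : ℝ :=
  θ ^ Multiset.card m / ((m.prod : ℝ) * ∏ n ∈ m.toFinset, ((m.count n).factorial : ℝ))

noncomputable def Ssum (θ : ℝ) (n : ℕ) (G : Multiset ℕ → ℝ) : ℝ :=
  ∑ p : Nat.Partition n, wt θ p.parts * G p.parts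

lemma fact_cons (j : ℕ) (m : Multiset ℕ) :
    ∏ n ∈ (j ::ₘ m).toFinset, (((j ::ₘ m).count n).factorial : ℝ)
      = (m.count j + 1 : ℝ) * ∏ n ∈ m.toFinset, ((m.count n).factorial : ℝ) := by
  have h1 : ∏ n ∈ m.toFinset, ((m.count n).factorial : ℝ)
      = ∏ n ∈ (j ::ₘ m).toFinset, ((m.count n).factorial : ℝ) := by
    apply Finset.prod_subset
    · intro x hx; simp at hx ⊢; exact Or.inr hx
    · intro x _ hx
      have : m.count x = 0 := by simpa using hx
      simp [this]
  have hj : j ∈ (j ::ₘ m).toFinset := by simp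
  rw [h1, ← Finset.mul_prod_erase _ _ hj, ← Finset.mul_prod_erase _ (fun n => ((m.count n).factorial : ℝ)) hj, ← mul_assoc]
  congr 1
  · rw [Multiset.count_cons_self, Nat.factorial_succ]; push_cast; ring
  · apply Finset.prod_congr rfl
    intro x hx
    rw [Multiset.count_cons_of_ne (Finset.ne_of_mem_erase hx)]

lemma wt_cons (θ : ℝ) (j : ℕ) (hj : 1 ≤ j) (m : Multiset ℕ) :
    wt θ (j ::ₘ m) * ((j ::ₘ m).count j : ℝ) = θ / j * wt θ m := by
  unfold wt
  rw [fact_cons, Multiset.count_cons_self, Multiset.card_cons, Multiset.prod_cons]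
  have : (m.count j + 1 : ℝ) ≠ 0 := by positivity
  have : (j : ℝ) ≠ 0 := by positivity
  simp only [Nat.cast_mul, Nat.cast_add, Nat.cast_one]
  rw [div_mul_eq_mul_div, div_mul_div_comm,
    show (j * (m.prod:ℝ) * ((m.count j + 1 : ℝ) * ∏ n ∈ m.toFinset, ((m.count n).factorial : ℝ)))
      = (j * (m.prod * ∏ n ∈ m.toFinset, ((m.count n).factorial : ℝ))) * (m.count j + 1) by ring,
    mul_div_mul_right _ _ ‹_›, pow_succ']

lemma Ssum_count (θ : ℝ) (n j : ℕ) (hj : 1 ≤ j) (hjn : j ≤ n) (G : Multiset ℕ → ℝ) :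
    Ssum θ n (fun m => (m.count j : ℝ) * G m)
      = θ / j * Ssum θ (n - j) (fun m => G (j ::ₘ m)) := by
  unfold Ssum
  rw [← Finset.sum_filter_of_ne (p := fun p : Nat.Partition n => j ∈ p.parts), Finset.mul_sum]
  · symm
    refine Finset.sum_bij' (fun p _ => (⟨j ::ₘ p.parts, ?_, ?_⟩ : Nat.Partition n))
      (fun p hp => (⟨p.parts.erase j, ?_, ?_⟩ : Nat.Partition (n - j))) ?_ ?_ ?_ ?_ ?_
    · intro i hi
      rcases Multiset.mem_cons.1 hi with h | h
      · omega
      · exact p.parts_pos h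
    · rw [Multiset.sum_cons, p.parts_sum]; omega
    · intro i hi
      exact p.parts_pos (Multiset.mem_of_mem_erase hi)
    · have h := (Finset.mem_filter.1 hp).2
      have := Multiset.sum_erase h
      rw [p.parts_sum] at this; omega
    · intro p _; simp
    · intro p _; simp
    · intro p _; ext1; simp
    · intro p hp; ext1; simp [Multiset.cons_erase (Finset.mem_filter.1 hp).2]
    · intro p _
      simp only
      rw [← mul_assoc, ← wt_cons θ j hj]; ring
  · intro p _ h
    by_contra hc
    exact h (by simp [Multiset.count_eq_zero.2 hc])

lemma count_zero {n j : ℕ} (hj : n < j) (p : Nat.Partition n) : p.parts.count j = 0 := by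
  rw [Multiset.count_eq_zero]
  intro h
  have := Multiset.single_le_sum (fun _ _ => Nat.zero_le _) _ h
  rw [p.parts_sum] at this; omega

lemma sum_count {n : ℕ} (p : Nat.Partition n) :
    ∑ j ∈ Finset.Icc 1 n, (p.parts.count j : ℝ) * j = n := by
  have h : p.parts.toFinset ⊆ Finset.Icc 1 n := by
    intro x hx
    rw [Multiset.mem_toFinset] at hx
    rw [Finset.mem_Icc]
    refine ⟨p.parts_pos hx, ?_⟩
    by_contra hc
    exact (Multiset.count_pos.2 hx).ne' (count_zero (by omega) p)
  have := Finset.sum_multiset_count_of_subset p.parts _ h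
  rw [p.parts_sum] at this
  conv_rhs => rw [this]
  push_cast [smul_eq_mul]; rfl

noncomputable def Z (θ : ℝ) (n : ℕ) : ℝ := Ssum θ n (fun _ => 1)

lemma Z_rec (θ : ℝ) (n : ℕ) : n * Z θ n = θ * ∑ i ∈ Finset.range n, Z θ i := by
  have : n * Z θ n = ∑ j ∈ Finset.Icc 1 n, j * Ssum θ n (fun m => (m.count j : ℝ) * 1) := by
    unfold Z Ssum
    simp_rw [Finset.mul_sum]
    rw [Finset.sum_comm]
    apply Finset.sum_congr rfl
    intro p _
    rw [← sum_count p, Finset.sum_mul]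
    apply Finset.sum_congr rfl
    intro j _; ring
  rw [this, Finset.mul_sum]
  refine Finset.sum_bij' (fun j _ => n - j) (fun i _ => n - i) ?_ ?_ ?_ ?_ ?_
  · intro j hj; simp at hj ⊢; omega
  · intro j hj; simp at hj ⊢; omega
  · intro j hj; simp at hj ⊢; omega
  · intro j hj; simp at hj ⊢; omega
  · intro j hj
    rw [Finset.mem_Icc] at hj
    rw [Ssum_count θ n j hj.1 hj.2]
    have : (j : ℝ) ≠ 0 := by have := hj.1; positivity
    unfold Z
    field_simp

lemma Z_succ (θ : ℝ) (n : ℕ) : ((n : ℝ) + 1) * Z θ (n + 1) = (θ + n) * Z θ n := by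
  have h1 := Z_rec θ n
  have h2 := Z_rec θ (n + 1)
  rw [Finset.sum_range_succ] at h2
  push_cast at h2
  linarith

lemma Z_zero (θ : ℝ) : Z θ 0 = 1 := by
  simp [Z, Ssum, wt]

lemma Z_eq (θ : ℝ) (n : ℕ) : n.factorial * Z θ n = ∏ i ∈ Finset.range n, (θ + (i : ℝ)) := by
  induction n with
  | zero => simp [Z_zero]
  | succ n ih =>
    rw [Finset.prod_range_succ, ← ih, Nat.factorial_succ]
    push_cast
    linear_combination (n.factorial : ℝ) * Z_succ θ n

lemma Z_pos (θ : ℝ) (hθ : 0 < θ) (n : ℕ) : 0 < Z θ n := by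
  have h := Z_eq θ n
  have h2 : 0 < ∏ i ∈ Finset.range n, (θ + (i : ℝ)) := Finset.prod_pos (fun i _ => by positivity)
  rw [← h] at h2
  exact pos_of_mul_pos_right h2 (by positivity)

lemma Psi_eq (θ : ℝ) (hθ : 0 < θ) (n j : ℕ) (hj : j ≤ n) : Psi θ n j = Z θ (n - j) / Z θ n := by
  induction j with
  | zero => simp [Psi, (Z_pos θ hθ n).ne']
  | succ j ih =>
    have h1 := ih (by omega)
    unfold Psi at h1 ⊢
    rw [Finset.prod_range_succ, h1]
    obtain ⟨k, rfl⟩ := Nat.exists_eq_add_of_le hj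
    have e1 : j + 1 + k - j = k + 1 := by omega
    have e2 : j + 1 + k - (j + 1) = k := by omega
    rw [e1, e2]
    push_cast
    have h3 := Z_succ θ k
    have h4 := (Z_pos θ hθ (j + 1 + k)).ne'
    rw [show (j : ℝ) + 1 + k - j = k + 1 by ring, show θ + ((j : ℝ) + 1 + k) - 1 - j = θ + k by ring]
    have : θ + (k : ℝ) ≠ 0 := by positivity
    field_simp
    linarith

/-- the cycle partition, with fixed points -/
def permPart {N : ℕ} (σ : Equiv.Perm (Fin N)) : Nat.Partition N where
  parts := σ.cycleType + Multiset.replicate (N - σ.support.card) 1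
  parts_pos := by
    intro i hi
    have := σ.partition.parts_pos (i := i)
    rw [Equiv.Perm.parts_partition, Fintype.card_fin] at this
    exact this hi
  parts_sum := by
    have := σ.partition.parts_sum
    rw [Equiv.Perm.parts_partition, Fintype.card_fin] at this
    exact this

lemma totalCycles_eq {N : ℕ} (σ : Equiv.Perm (Fin N)) :
    totalCycles N σ = Multiset.card (permPart σ).parts := by
  simp [totalCycles, permPart]

lemma cycleCount_eq {N : ℕ} (σ : Equiv.Perm (Fin N)) (j : ℕ) :
    cycleCount N σ j = (permPart σ).parts.count j := by
  unfold cycleCount permPart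
  simp only [Multiset.count_add, Multiset.count_replicate]
  split_ifs with h h' h'
  · subst h
    have : σ.cycleType.count 1 = 0 := by
      rw [Multiset.count_eq_zero]
      intro h
      exact absurd (Equiv.Perm.two_le_of_mem_cycleType h) (by norm_num)
    omega
  · omega
  · omega
  · omega

lemma fact_replicate (m : Multiset ℕ) (hm : ∀ a ∈ m, 2 ≤ a) (k : ℕ) :
    ∏ n ∈ (m + Multiset.replicate k 1).toFinset,
      (((m + Multiset.replicate k 1).count n).factorial : ℝ)
      = k.factorial * ∏ n ∈ m.toFinset, ((m.count n).factorial : ℝ) := by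
  have h0 : m.count 1 = 0 := by
    rw [Multiset.count_eq_zero]
    intro h
    exact absurd (hm _ h) (by norm_num)
  induction k with
  | zero => simp
  | succ k ih =>
    rw [Multiset.replicate_succ, Multiset.add_cons, fact_cons, ih, Multiset.count_add, h0,
      Multiset.count_replicate_self, Nat.factorial_succ]
    push_cast
    ring

lemma parts_split {N : ℕ} (p : Nat.Partition N) :
    p.parts = p.parts.filter (fun n => 2 ≤ n) +
      Multiset.replicate (N - (p.parts.filter (fun n => 2 ≤ n)).sum) 1 := by
  have h : p.parts.filter (fun n => ¬ 2 ≤ n)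
      = Multiset.replicate (Multiset.card (p.parts.filter (fun n => ¬ 2 ≤ n))) 1 := by
    rw [Multiset.eq_replicate]
    refine ⟨rfl, ?_⟩
    intro b hb
    rw [Multiset.mem_filter] at hb
    have := p.parts_pos hb.1
    omega
  have h2 := Multiset.filter_add_not (fun n => 2 ≤ n) p.parts
  have h3 := congrArg Multiset.sum h2
  rw [Multiset.sum_add, p.parts_sum, h, Multiset.sum_replicate] at h3
  have h4 : N - (p.parts.filter (fun n => 2 ≤ n)).sum
      = Multiset.card (p.parts.filter (fun n => ¬ 2 ≤ n)) := by
    simp only [smul_eq_mul, mul_one] at h3; omega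
  rw [h4, ← h, h2]

lemma fiber_card {N : ℕ} (p : Nat.Partition N) :
    ((Finset.univ.filter (fun σ : Equiv.Perm (Fin N) => permPart σ = p)).card : ℝ) *
      ((p.parts.prod : ℝ) * ∏ n ∈ p.parts.toFinset, ((p.parts.count n).factorial : ℝ))
      = N.factorial := by
  set m := p.parts.filter (fun n => 2 ≤ n) with hm
  have hm2 : ∀ a ∈ m, 2 ≤ a := fun a ha => (Multiset.mem_filter.1 ha).2
  have hsplit := parts_split p
  rw [← hm] at hsplit
  have hsum : m.sum ≤ N := by
    have := congrArg Multiset.sum hsplit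
    rw [p.parts_sum, Multiset.sum_add] at this
    omega
  have hf : Finset.univ.filter (fun σ : Equiv.Perm (Fin N) => permPart σ = p)
      = Finset.univ.filter (fun σ : Equiv.Perm (Fin N) => σ.cycleType = m) := by
    ext σ
    simp only [Finset.mem_filter, Finset.mem_univ, true_and]
    constructor
    · rintro h
      rw [hm, ← h]
      have := Equiv.Perm.filter_parts_partition_eq_cycleType (σ := σ)
      rw [Equiv.Perm.parts_partition, Fintype.card_fin] at this
      exact this.symm
    · intro h
      ext1
      rw [hsplit, ← h, Equiv.Perm.sum_cycleType]
      rfl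
  have hc := Equiv.Perm.card_of_cycleType_mul_eq (α := Fin N) m
  rw [Fintype.card_fin, if_pos ⟨hsum, hm2⟩] at hc
  rw [hf, hsplit, fact_replicate m hm2, Multiset.prod_add, Multiset.prod_replicate, one_pow, mul_one,
    ← hc]
  push_cast
  ring

lemma ewens_sum (θ : ℝ) (hθ : 0 < θ) (N : ℕ) (G : Multiset ℕ → ℝ) :
    ∑ σ : Equiv.Perm (Fin N), ewens θ N σ * G (permPart σ).parts = Ssum θ N G / Z θ N := by
  rw [← Finset.sum_fiberwise Finset.univ (permPart (N := N)), Ssum, Finset.sum_div]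
  apply Finset.sum_congr rfl
  intro p _
  have h : ∀ σ ∈ Finset.univ.filter (fun σ : Equiv.Perm (Fin N) => permPart σ = p),
      ewens θ N σ * G (permPart σ).parts
        = θ ^ Multiset.card p.parts / (N.factorial * Z θ N) * G p.parts := by
    intro σ hσ
    rw [Finset.mem_filter] at hσ
    rw [ewens, totalCycles_eq, hσ.2, Z_eq]
  rw [Finset.sum_congr rfl h, Finset.sum_const, nsmul_eq_mul, wt]
  have hc := fiber_card p
  have hN : (N.factorial : ℝ) ≠ 0 := by positivity
  have hZ := (Z_pos θ hθ N).ne'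
  rw [← hc] at hN ⊢
  have h1 := left_ne_zero_of_mul hN
  have h2 := right_ne_zero_of_mul hN
  generalize ((p.parts.prod : ℝ) * ∏ n ∈ p.parts.toFinset, ((p.parts.count n).factorial : ℝ)) = A at *
  field_simp

lemma mean_count (θ : ℝ) (hθ : 0 < θ) (N j : ℕ) (hj : 1 ≤ j) (hjN : j ≤ N) :
    ∑ σ : Equiv.Perm (Fin N), ewens θ N σ * (cycleCount N σ j : ℝ) = θ / j * Psi θ N j := by
  have h := ewens_sum θ hθ N (fun m => (m.count j : ℝ) * 1)
  rw [Ssum_count θ N j hj hjN] at h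
  simp only [mul_one] at h
  simp only [cycleCount_eq]
  rw [h, Psi_eq θ hθ N j hjN, mul_div_assoc]
  rfl

lemma mean_count2 (θ : ℝ) (hθ : 0 < θ) (N j k : ℕ) (hj : 1 ≤ j) (hjN : j ≤ N)
    (hk : 1 ≤ k) :
    ∑ σ : Equiv.Perm (Fin N), ewens θ N σ * ((cycleCount N σ j : ℝ) * (cycleCount N σ k : ℝ))
      = θ ^ 2 / (j * k) * (if j + k ≤ N then Psi θ N (j + k) else 0)
        + if j = k then θ / j * Psi θ N j else 0 := by
  have h := ewens_sum θ hθ N (fun m => (m.count j : ℝ) * m.count k)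
  rw [Ssum_count θ N j hj hjN] at h
  simp only [cycleCount_eq]
  rw [h]
  have h2 : Ssum θ (N - j) (fun m => ((j ::ₘ m).count k : ℝ))
      = Ssum θ (N - j) (fun m => (m.count k : ℝ) * 1) + if j = k then Z θ (N - j) else 0 := by
    unfold Z Ssum
    split_ifs with hjk
    · rw [← Finset.sum_add_distrib]
      apply Finset.sum_congr rfl
      intro p _
      subst hjk
      beta_reduce
      rw [Multiset.count_cons_self]; push_cast; ring
    · rw [add_zero]
      apply Finset.sum_congr rfl
      intro p _
      beta_reduce
      rw [Multiset.count_cons_of_ne (Ne.symm hjk), mul_one]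
  have h3 : Ssum θ (N - j) (fun m => (m.count k : ℝ) * 1)
      = θ / k * if j + k ≤ N then Z θ (N - (j + k)) else 0 := by
    split_ifs with hjk
    · rw [Ssum_count θ (N - j) k hk (by omega), Z, Nat.sub_sub]
    · unfold Ssum
      rw [mul_zero]
      apply Finset.sum_eq_zero
      intro p _
      beta_reduce
      rw [count_zero (j := k) (by omega) p]; simp
  rw [h2, h3, Psi_eq θ hθ N j hjN]
  have hj0 : (j : ℝ) ≠ 0 := by positivity
  have hk0 : (k : ℝ) ≠ 0 := by positivity
  have hZ := (Z_pos θ hθ N).ne'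
  split_ifs with h4 h5 h5
  · rw [Psi_eq θ hθ N (j + k) h4]; field_simp
  · rw [Psi_eq θ hθ N (j + k) h4]; field_simp; try ring
  · field_simp; try ring
  · simp



/-- The variance of `X_N^I` under the Ewens measure of parameter `θ` equals
`θ ∑_{j=1}^N (ω_j²/j) Ψ_N(j)
  + θ² ∑_{1≤j,k≤N} (ω_j ω_k/(jk)) (Ψ_N(j+k)·1_{j+k≤N} − Ψ_N(j)Ψ_N(k))`,
where `ω_j = {jβ} − {jα}`. -/
theorem stmt_8 (θ : ℝ) (hθ : 0 < θ) (N : ℕ) (hN : 1 ≤ N) (α β : ℝ)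
    (hα0 : 0 ≤ α) (hα1 : α < 1) (hαβ : α < β) (hβ : β ≤ α + 1)
    (ω : ℕ → ℝ) (hω : ∀ j, ω j = Int.fract ((j : ℝ) * β) - Int.fract ((j : ℝ) * α)) :
    (∑ σ : Equiv.Perm (Fin N), ewens θ N σ * (XNI N α β σ) ^ 2)
      - (∑ σ : Equiv.Perm (Fin N), ewens θ N σ * XNI N α β σ) ^ 2
      = θ * ∑ j ∈ Finset.Icc 1 N, (ω j) ^ 2 / (j : ℝ) * Psi θ N j
        + θ ^ 2 * ∑ j ∈ Finset.Icc 1 N, ∑ k ∈ Finset.Icc 1 N,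
            (ω j * ω k / ((j : ℝ) * (k : ℝ))) *
              ((if j + k ≤ N then Psi θ N (j + k) else 0) - Psi θ N j * Psi θ N k) := by
  have hE1 : ∑ σ : Equiv.Perm (Fin N), ewens θ N σ = 1 := by
    have h := ewens_sum θ hθ N (fun _ => 1)
    simp only [mul_one] at h
    rw [h]
    exact div_self (Z_pos θ hθ N).ne'
  set g : Equiv.Perm (Fin N) → ℝ := fun σ => ∑ j ∈ Finset.Icc 1 N, (cycleCount N σ j : ℝ) * ω j
    with hg
  have hX : ∀ σ, XNI N α β σ = N * (β - α) - g σ := by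
    intro σ
    rw [hg, XNI, ← sum_count (permPart σ), Finset.sum_mul]
    simp only
    rw [← Finset.sum_sub_distrib]
    apply Finset.sum_congr rfl
    intro j _
    rw [hω, ← cycleCount_eq, Int.fract, Int.fract]
    ring
  have hEg : ∑ σ : Equiv.Perm (Fin N), ewens θ N σ * g σ
      = ∑ j ∈ Finset.Icc 1 N, ω j * (θ / j * Psi θ N j) := by
    simp only [hg, Finset.mul_sum]
    rw [Finset.sum_comm]
    apply Finset.sum_congr rfl
    intro j hj
    rw [Finset.mem_Icc] at hj
    rw [← mean_count θ hθ N j hj.1 hj.2, Finset.mul_sum]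
    apply Finset.sum_congr rfl
    intro σ _
    ring
  have hEg2 : ∑ σ : Equiv.Perm (Fin N), ewens θ N σ * g σ ^ 2
      = ∑ j ∈ Finset.Icc 1 N, ∑ k ∈ Finset.Icc 1 N, ω j * ω k *
        (θ ^ 2 / (j * k) * (if j + k ≤ N then Psi θ N (j + k) else 0)
        + if j = k then θ / j * Psi θ N j else 0) := by
    simp only [hg, sq (Finset.sum _ _), Finset.sum_mul_sum]
    simp only [Finset.mul_sum]
    rw [Finset.sum_comm]
    apply Finset.sum_congr rfl
    intro j hj
    rw [Finset.sum_comm]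
    apply Finset.sum_congr rfl
    intro k hk
    rw [Finset.mem_Icc] at hj hk
    rw [← mean_count2 θ hθ N j k hj.1 hj.2 hk.1, Finset.mul_sum]
    apply Finset.sum_congr rfl
    intro σ _
    ring
  have hvar : (∑ σ : Equiv.Perm (Fin N), ewens θ N σ * (XNI N α β σ) ^ 2)
      - (∑ σ : Equiv.Perm (Fin N), ewens θ N σ * XNI N α β σ) ^ 2
      = (∑ σ : Equiv.Perm (Fin N), ewens θ N σ * g σ ^ 2)
        - (∑ σ : Equiv.Perm (Fin N), ewens θ N σ * g σ) ^ 2 := by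
    simp only [hX]
    generalize (N : ℝ) * (β - α) = c
    have e1 : ∑ σ : Equiv.Perm (Fin N), ewens θ N σ * (c - g σ)
        = c - ∑ σ : Equiv.Perm (Fin N), ewens θ N σ * g σ := by
      simp only [mul_sub, Finset.sum_sub_distrib, ← Finset.sum_mul, hE1, one_mul]
    have e2 : ∑ σ : Equiv.Perm (Fin N), ewens θ N σ * (c - g σ) ^ 2
        = c ^ 2 - 2 * c * ∑ σ : Equiv.Perm (Fin N), ewens θ N σ * g σ
          + ∑ σ : Equiv.Perm (Fin N), ewens θ N σ * g σ ^ 2 := by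
      rw [← one_mul (c ^ 2), ← hE1, Finset.sum_mul, Finset.mul_sum, ← Finset.sum_sub_distrib,
        ← Finset.sum_add_distrib]
      apply Finset.sum_congr rfl
      intro σ _
      ring
    rw [e1, e2]
    ring
  rw [hvar, hEg, hEg2, sq (Finset.sum _ _), Finset.sum_mul_sum, Finset.mul_sum, Finset.mul_sum,
    ← Finset.sum_sub_distrib, ← Finset.sum_add_distrib]
  apply Finset.sum_congr rfl
  intro j hj
  rw [Finset.mul_sum, ← Finset.sum_sub_distrib, ← sub_eq_iff_eq_add, ← Finset.sum_sub_distrib]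
  rw [Finset.sum_eq_single_of_mem j hj]
  · rw [if_pos rfl]; ring
  · intro k _ hk
    rw [if_neg (Ne.symm hk)]; ring
end

section
/- Let θ > 0 and let δ ∈ (0,1] be a fixed real number. Define S_N := ∑_{j=1}^N (Ψ_N(j)/j) {jδ}(1 − {jδ}). Then S_N / log N converges as N → ∞ to ℓ, where ℓ = 1/6 if δ is irrational, and ℓ = 1/6 − 1/(6q²) if δ = p/q with p, q coprime integers and q ≥ 2. (Equivalently, the variance of the number of eigenvalues of a modified random permutation matrix under the Ewens measure of parameter θ lying in a fixed arc of length δ is asymptotic to ℓ θ log N.) -/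
open Filter Finset

lemma Psi_zero (θ : ℝ) (n : ℕ) : Psi θ n 0 = 1 := by simp [Psi]

lemma Psi_succ {θ : ℝ} (hθ : 0 < θ) {n j : ℕ} (h : j < n) :
    Psi θ n (j + 1) * (θ + n - 1 - j) = Psi θ n j * (n - j) := by
  have h1 : ((j : ℝ) + 1) ≤ n := by exact_mod_cast h
  have h2 : θ + (n : ℝ) - 1 - j ≠ 0 := by
    have : 0 < θ + (n : ℝ) - 1 - j := by linarith
    exact this.ne'
  unfold Psi
  rw [Finset.prod_range_succ, mul_assoc, div_mul_cancel₀ _ h2]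

lemma Psi_nonneg {θ : ℝ} (hθ : 0 < θ) {n j : ℕ} (h : j ≤ n) : 0 ≤ Psi θ n j := by
  unfold Psi
  refine Finset.prod_nonneg fun i hi => ?_
  have h1 : ((i : ℝ) + 1) ≤ n := by
    have := Finset.mem_range.mp hi
    exact_mod_cast (by omega : i + 1 ≤ n)
  apply div_nonneg <;> linarith

lemma Psi_sum {θ : ℝ} (hθ : 0 < θ) {n : ℕ} (j : ℕ) (h : j ≤ n) :
    ((n : ℝ) - j) * Psi θ n j + θ * ∑ i ∈ Finset.Icc 1 j, Psi θ n i = n := by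
  induction j with
  | zero => simp [Psi_zero]
  | succ j ih =>
    have := ih (by omega)
    have h2 := Psi_succ hθ (show j < n by omega)
    rw [Finset.sum_Icc_succ_top (by omega)]
    push_cast
    linarith

lemma Psi_le_one {θ : ℝ} (hθ : 1 ≤ θ) {n : ℕ} (j : ℕ) (h : j ≤ n) : Psi θ n j ≤ 1 := by
  unfold Psi
  refine Finset.prod_le_one (fun i hi => ?_) (fun i hi => ?_)
  all_goals
    have h1 : ((i : ℝ) + 1) ≤ n := by
      have := Finset.mem_range.mp hi
      exact_mod_cast (by omega : i + 1 ≤ n)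
  · apply div_nonneg <;> linarith
  · rw [div_le_one (by linarith)]; linarith

lemma Psi_mono {θ : ℝ} (hθ : 0 < θ) (hθ1 : θ ≤ 1) {n : ℕ} {i j : ℕ} (hij : i ≤ j) (h : j ≤ n) :
    Psi θ n i ≤ Psi θ n j := by
  induction j, hij using Nat.le_induction with
  | base => exact le_rfl
  | succ j hij ih =>
    refine (ih (by omega)).trans ?_
    have h1 : ((j : ℝ) + 1) ≤ n := by exact_mod_cast h
    have h2 := Psi_succ hθ (show j < n by omega)
    have h3 := Psi_nonneg hθ h
    have h4 : Psi θ n j * (n - j) ≤ Psi θ n (j + 1) * (n - j) := by nlinarith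
    exact le_of_mul_le_mul_right h4 (by linarith)

lemma Psi_le {θ : ℝ} (hθ : 0 < θ) {n : ℕ} {i j : ℕ} (hij : i ≤ j) (h : j ≤ n) :
    Psi θ n i ≤ 1 + Psi θ n j := by
  rcases le_total θ 1 with h1 | h1
  · linarith [Psi_mono hθ h1 hij h]
  · linarith [Psi_le_one h1 i (hij.trans h), Psi_nonneg hθ h]

lemma Psi_diff {θ : ℝ} (hθ : 0 < θ) {n : ℕ} {j : ℕ} (hj : 1 ≤ j) (h : j ≤ n) :
    |Psi θ n j - 1| / j ≤ (Psi θ n j + θ * (1 + Psi θ n j)) / n := by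
  have hj0 : (0 : ℝ) < j := by exact_mod_cast hj
  have hn0 : (0 : ℝ) < n := by exact_mod_cast (by omega : 0 < n)
  have h1 := Psi_sum hθ j h
  have h2 : ∑ i ∈ Finset.Icc 1 j, Psi θ n i ≤ j * (1 + Psi θ n j) := by
    have := Finset.sum_le_card_nsmul (Finset.Icc 1 j) (fun i => Psi θ n i) (1 + Psi θ n j)
      (fun i hi => Psi_le hθ (Finset.mem_Icc.mp hi).2 h)
    simpa [mul_add] using this
  have h3 : 0 ≤ ∑ i ∈ Finset.Icc 1 j, Psi θ n i :=
    Finset.sum_nonneg fun i hi => Psi_nonneg hθ ((Finset.mem_Icc.mp hi).2.trans h)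
  have h0 := Psi_nonneg hθ h
  rw [div_le_div_iff₀ hj0 hn0]
  have h4 : |Psi θ n j - 1| * n = |j * Psi θ n j - θ * ∑ i ∈ Finset.Icc 1 j, Psi θ n i| := by
    rw [← abs_of_pos hn0, ← abs_mul]
    congr 1
    linarith
  rw [h4, abs_le]
  have h5 := mul_le_mul_of_nonneg_left h2 hθ.le
  have h6 := mul_nonneg hθ.le h3
  have h7 := mul_nonneg hj0.le h0
  have h8 : 0 ≤ j * (θ * (1 + Psi θ n j)) := by positivity
  constructor <;> nlinarith

lemma Psi_diff_sum {θ : ℝ} (hθ : 0 < θ) {n : ℕ} (hn : 1 ≤ n) :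
    ∑ j ∈ Finset.Icc 1 n, |Psi θ n j - 1| / j ≤ (1 + θ) / θ + θ := by
  have hn0 : (0 : ℝ) < n := by exact_mod_cast hn
  refine (Finset.sum_le_sum fun j hj =>
    Psi_diff hθ (Finset.mem_Icc.mp hj).1 (Finset.mem_Icc.mp hj).2).trans ?_
  have h1 := Psi_sum hθ n le_rfl
  have h2 : ∑ i ∈ Finset.Icc 1 n, Psi θ n i = n / θ := by
    rw [eq_div_iff hθ.ne']; linarith
  rw [← Finset.sum_div, Finset.sum_add_distrib, ← Finset.mul_sum, Finset.sum_add_distrib, h2]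
  simp only [sum_const, Nat.card_Icc, add_tsub_cancel_right, nsmul_eq_mul, mul_one]
  apply le_of_eq
  field_simp
  ring

lemma tendsto_log_nat : Tendsto (fun N : ℕ => Real.log N) atTop atTop :=
  Real.tendsto_log_atTop.comp tendsto_natCast_atTop_atTop

lemma harm_sum (N : ℕ) : ∑ j ∈ Finset.Icc 1 N, 1 / (j : ℝ) = harmonic N := by
  rw [harmonic_eq_sum_Icc]; push_cast; simp

lemma harm_tendsto :
    Tendsto (fun N : ℕ => (∑ j ∈ Finset.Icc 1 N, 1 / (j : ℝ)) / Real.log N) atTop (nhds 1) := by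
  have h1 := Real.tendsto_harmonic_sub_log.div_atTop tendsto_log_nat
  have h2 := h1.add_const 1
  rw [zero_add] at h2
  refine h2.congr' ?_
  filter_upwards [tendsto_log_nat.eventually_ge_atTop 1] with N hN
  rw [harm_sum]
  have : Real.log N ≠ 0 := by linarith
  field_simp
  ring

lemma cos_sum_bdd {α : ℝ} (h : Complex.exp (α * Complex.I) ≠ 1) :
    ∃ b, ∀ n, ‖∑ i ∈ Finset.range n, Real.cos ((i + 1 : ℕ) * α)‖ ≤ b := by
  set z := Complex.exp (α * Complex.I) with hz
  refine ⟨2 / ‖z - 1‖, fun n => ?_⟩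
  have hz1 : ‖z‖ = 1 := Complex.norm_exp_ofReal_mul_I α
  have h1 : ∑ i ∈ Finset.range n, Real.cos ((i + 1 : ℕ) * α)
      = (z * ∑ i ∈ Finset.range n, z ^ i).re := by
    rw [Finset.mul_sum, Complex.re_sum]
    refine Finset.sum_congr rfl fun i _ => ?_
    rw [← pow_succ', hz, ← Complex.exp_nat_mul, ← Complex.exp_ofReal_mul_I_re]
    congr 2
    push_cast
    ring
  rw [h1, geom_sum_eq h]
  refine (Complex.abs_re_le_norm _).trans ?_
  rw [norm_mul, norm_div, hz1, one_mul]
  gcongr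
  refine (norm_sub_le _ _).trans ?_
  rw [norm_pow, hz1]; norm_num

lemma cos_log_tendsto {α : ℝ} (h : Complex.exp (α * Complex.I) ≠ 1) :
    Tendsto (fun N : ℕ => (∑ j ∈ Finset.Icc 1 N, 1 / (j : ℝ) * Real.cos (j * α)) / Real.log N)
      atTop (nhds 0) := by
  obtain ⟨b, hb⟩ := cos_sum_bdd h
  have h1 : Antitone (fun i : ℕ => 1 / ((i : ℝ) + 1)) := by
    intro i j hij
    have : (i : ℝ) ≤ j := by exact_mod_cast hij
    dsimp only
    gcongr
  have h2 := h1.cauchySeq_series_mul_of_tendsto_zero_of_bounded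
    tendsto_one_div_add_atTop_nhds_zero_nat hb
  obtain ⟨l, hl⟩ := cauchySeq_tendsto_of_complete h2
  have h3 := hl.div_atTop tendsto_log_nat
  refine h3.congr fun N => ?_
  congr 1
  rw [← Finset.Ico_add_one_right_eq_Icc, Finset.sum_Ico_eq_sum_range]
  refine Finset.sum_congr rfl fun i _ => ?_
  simp [add_comm]

lemma fract_series (y : ℝ) :
    HasSum (fun k : ℕ => 1 / (k : ℝ) ^ 2 * Real.cos (2 * Real.pi * k * y))
      (Real.pi ^ 2 * (1 / 6 - Int.fract y * (1 - Int.fract y))) := by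
  have h := hasSum_one_div_nat_pow_mul_cos one_ne_zero
    (x := Int.fract y) ⟨Int.fract_nonneg y, (Int.fract_lt_one y).le⟩
  convert h using 1
  · funext k
    rw [mul_one]
    congr 1
    have : 2 * Real.pi * k * y = 2 * Real.pi * k * Int.fract y
        + ((k * ⌊y⌋ : ℤ) : ℝ) * (2 * Real.pi) := by
      nth_rewrite 1 [← Int.fract_add_floor y]
      push_cast
      ring
    rw [this, Real.cos_add_int_mul_two_pi]
  · have h2 := bernoulliFun_two (Int.fract y)
    unfold bernoulliFun at h2
    rw [mul_one, h2]
    norm_num [Nat.factorial]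
    ring

lemma exp_ne_one {x : ℝ} (h : ¬ ∃ m : ℤ, x = m) :
    Complex.exp (((2 * Real.pi * x : ℝ) : ℂ) * Complex.I) ≠ 1 := by
  intro h1
  obtain ⟨m, hm⟩ := Complex.exp_eq_one_iff.mp h1
  apply h
  refine ⟨m, ?_⟩
  have h2 : ((x : ℝ) : ℂ) = ((m : ℝ) : ℂ) := by
    have hp := Complex.two_pi_I_ne_zero
    apply mul_right_cancel₀ hp
    push_cast at hm ⊢
    rw [← hm]; ring
  exact_mod_cast h2

open Classical in
lemma cos_lim (x : ℝ) :
    Tendsto (fun N : ℕ => (∑ j ∈ Finset.Icc 1 N, 1 / (j : ℝ) *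
      Real.cos (j * (2 * Real.pi * x))) / Real.log N)
      atTop (nhds (if ∃ m : ℤ, x = m then 1 else 0)) := by
  split_ifs with h
  · obtain ⟨m, rfl⟩ := h
    refine harm_tendsto.congr fun N => ?_
    congr 1
    refine Finset.sum_congr rfl fun j _ => ?_
    have : (j : ℝ) * (2 * Real.pi * m) = ((j * m : ℤ) : ℝ) * (2 * Real.pi) := by
      push_cast; ring
    rw [this, Real.cos_int_mul_two_pi, mul_one]
  · exact cos_log_tendsto (exp_ne_one h)

open Classical in
lemma log_mean (δ : ℝ) :
    Tendsto (fun N : ℕ => (∑ j ∈ Finset.Icc 1 N, 1 / (j : ℝ) *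
      (Int.fract ((j : ℝ) * δ) * (1 - Int.fract ((j : ℝ) * δ)))) / Real.log N) atTop
      (nhds (1 / 6 - 1 / Real.pi ^ 2 *
        ∑' k : ℕ, 1 / (k : ℝ) ^ 2 * (if ∃ m : ℤ, (k : ℝ) * δ = m then 1 else 0))) := by
  have hdom : Tendsto (fun N : ℕ => ∑' k : ℕ, 1 / (k : ℝ) ^ 2 *
      ((∑ j ∈ Finset.Icc 1 N, 1 / (j : ℝ) *
      Real.cos (j * (2 * Real.pi * (k * δ)))) / Real.log N)) atTop
      (nhds (∑' k : ℕ, 1 / (k : ℝ) ^ 2 * (if ∃ m : ℤ, (k : ℝ) * δ = m then 1 else 0))) := by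
    refine tendsto_tsum_of_dominated_convergence
      (bound := fun k : ℕ => 1 / (k : ℝ) ^ 2 * 2) (hasSum_zeta_two.summable.mul_right 2)
      (fun k => (cos_lim _).const_mul _) ?_
    filter_upwards [tendsto_log_nat.eventually_ge_atTop 1] with N hN k
    rw [norm_mul, Real.norm_of_nonneg (by positivity : (0 : ℝ) ≤ 1 / (k : ℝ) ^ 2)]
    gcongr
    rw [norm_div, Real.norm_of_nonneg (by linarith : 0 ≤ Real.log N), div_le_iff₀ (by linarith)]
    refine (norm_sum_le _ _).trans ?_
    have : ∑ j ∈ Finset.Icc 1 N, ‖1 / (j : ℝ) * Real.cos (j * (2 * Real.pi * (k * δ)))‖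
        ≤ ∑ j ∈ Finset.Icc 1 N, 1 / (j : ℝ) := by
      refine Finset.sum_le_sum fun j _ => ?_
      rw [norm_mul, Real.norm_of_nonneg (by positivity : (0 : ℝ) ≤ 1 / (j : ℝ))]
      exact mul_le_of_le_one_right (by positivity) (Real.abs_cos_le_one _)
    refine this.trans ?_
    rw [harm_sum]
    linarith [harmonic_le_one_add_log N]
  have h2 := (harm_tendsto.const_mul (1 / 6)).sub (hdom.const_mul (1 / Real.pi ^ 2))
  rw [mul_one] at h2
  refine h2.congr fun N => ?_
  have h3 : HasSum (fun k : ℕ => 1 / (k : ℝ) ^ 2 *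
      ((∑ j ∈ Finset.Icc 1 N, 1 / (j : ℝ) *
      Real.cos (j * (2 * Real.pi * (k * δ)))) / Real.log N))
      ((∑ j ∈ Finset.Icc 1 N, 1 / (j : ℝ) * (Real.pi ^ 2 * (1 / 6 - Int.fract (j * δ) *
        (1 - Int.fract (j * δ))))) / Real.log N) := by
    have := (hasSum_sum (s := Finset.Icc 1 N)
      fun j _ => (fract_series (j * δ)).mul_left (1 / (j : ℝ))).div_const (Real.log N)
    refine Eq.mp (congrArg (fun f => HasSum f _) ?_) this
    funext k
    symm
    rw [← mul_div_assoc, Finset.mul_sum]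
    congr 1
    refine Finset.sum_congr rfl fun j _ => ?_
    rw [show (2 * Real.pi * k * (j * δ)) = j * (2 * Real.pi * (k * δ)) by ring]
    ring
  rw [h3.tsum_eq, ← mul_div_assoc, ← mul_div_assoc, ← sub_div, Finset.mul_sum, Finset.mul_sum,
    ← Finset.sum_sub_distrib]
  congr 1
  refine Finset.sum_congr rfl fun j _ => ?_
  have := Real.pi_ne_zero
  field_simp
  ring

open Classical in
lemma main_lim {θ : ℝ} (hθ : 0 < θ) (δ : ℝ) :
    Tendsto (fun N : ℕ => (∑ j ∈ Finset.Icc 1 N,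
            Psi θ N j / (j : ℝ) * (Int.fract ((j : ℝ) * δ) * (1 - Int.fract ((j : ℝ) * δ))))
          / Real.log N) atTop
      (nhds (1 / 6 - 1 / Real.pi ^ 2 *
        ∑' k : ℕ, 1 / (k : ℝ) ^ 2 * (if ∃ m : ℤ, (k : ℝ) * δ = m then 1 else 0))) := by
  have herr : Tendsto (fun N : ℕ => (∑ j ∈ Finset.Icc 1 N,
      (Psi θ N j - 1) / (j : ℝ) * (Int.fract ((j : ℝ) * δ) * (1 - Int.fract ((j : ℝ) * δ))))
          / Real.log N) atTop (nhds 0) := by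
    have hC : Tendsto (fun N : ℕ => ((1 + θ) / θ + θ) / Real.log N) atTop (nhds 0) :=
      tendsto_const_nhds.div_atTop tendsto_log_nat
    refine squeeze_zero_norm' ?_ hC
    filter_upwards [tendsto_log_nat.eventually_ge_atTop 1, eventually_ge_atTop 1] with N hN hN1
    rw [norm_div, Real.norm_of_nonneg (by linarith : 0 ≤ Real.log N)]
    gcongr
    refine (norm_sum_le _ _).trans (le_trans ?_ (Psi_diff_sum hθ hN1))
    refine Finset.sum_le_sum fun j _ => ?_
    have h0 := Int.fract_nonneg ((j : ℝ) * δ)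
    have h1 := (Int.fract_lt_one ((j : ℝ) * δ)).le
    rw [norm_mul, norm_div, Real.norm_natCast, Real.norm_eq_abs, Real.norm_eq_abs,
      abs_of_nonneg (mul_nonneg h0 (by linarith) : 0 ≤ Int.fract ((j : ℝ) * δ) * _)]
    refine mul_le_of_le_one_right (by positivity) ?_
    nlinarith
  have h := (log_mean δ).add herr
  rw [add_zero] at h
  refine h.congr fun N => ?_
  rw [← add_div, ← Finset.sum_add_distrib]
  congr 1
  refine Finset.sum_congr rfl fun j _ => ?_
  ring

/-- With `S_N = ∑_{j=1}^N (Ψ_N(j)/j) {jδ}(1 − {jδ})`, the ratio `S_N / log N`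
converges to `1/6` if `δ` is irrational, and to `1/6 − 1/(6q²)` if `δ = p/q`
with `p, q` coprime integers and `q ≥ 2`. -/
theorem stmt_10 (θ : ℝ) (hθ : 0 < θ) (δ : ℝ) (hδ0 : 0 < δ) (hδ1 : δ ≤ 1) :
    (Irrational δ →
      Tendsto
        (fun N : ℕ =>
          (∑ j ∈ Finset.Icc 1 N,
            Psi θ N j / (j : ℝ) * (Int.fract ((j : ℝ) * δ) * (1 - Int.fract ((j : ℝ) * δ))))
          / Real.log N)
        atTop (nhds (1 / 6))) ∧
    (∀ p q : ℤ, Int.gcd p q = 1 → 2 ≤ q → δ = (p : ℝ) / (q : ℝ) →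
      Tendsto
        (fun N : ℕ =>
          (∑ j ∈ Finset.Icc 1 N,
            Psi θ N j / (j : ℝ) * (Int.fract ((j : ℝ) * δ) * (1 - Int.fract ((j : ℝ) * δ))))
          / Real.log N)
        atTop (nhds (1 / 6 - 1 / (6 * (q : ℝ) ^ 2)))) := by
  classical
  refine ⟨fun hirr => ?_, fun p q hpq hq hδ => ?_⟩
  · have h := main_lim hθ δ
    have h0 : ∀ k : ℕ, 1 / (k : ℝ) ^ 2 * (if ∃ m : ℤ, (k : ℝ) * δ = m then (1 : ℝ) else 0) = 0 := by
      intro k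
      rcases eq_or_ne k 0 with rfl | hk
      · simp
      · have : ¬ ∃ m : ℤ, (k : ℝ) * δ = m := by
          rintro ⟨m, hm⟩
          exact (hirr.natCast_mul hk).ne_int m hm
        rw [if_neg this, mul_zero]
    simp only [h0, tsum_zero, mul_zero, sub_zero] at h
    exact h
  · have h := main_lim hθ δ
    have hq0 : (q : ℝ) ≠ 0 := by exact_mod_cast (by omega : q ≠ 0)
    have hiff : ∀ k : ℕ, (∃ m : ℤ, (k : ℝ) * δ = m) ↔ q.toNat ∣ k := by
      intro k
      have e1 : q.toNat ∣ k ↔ q ∣ (k : ℤ) := by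
        rw [← Int.natCast_dvd_natCast, Int.toNat_of_nonneg (by omega)]
      rw [e1]
      constructor
      · rintro ⟨m, hm⟩
        have h1 : (k : ℤ) * p = m * q := by
          rw [hδ] at hm
          field_simp at hm
          exact_mod_cast (by linarith : (k : ℝ) * p = m * q)
        have h2 : q ∣ (k : ℤ) * p := ⟨m, by rw [h1]; ring⟩
        exact Int.dvd_of_dvd_mul_left_of_gcd_one h2 (by rw [Int.gcd_comm]; exact hpq)
      · rintro ⟨c, hc⟩
        refine ⟨c * p, ?_⟩
        have h1 : (k : ℝ) = q * c := by exact_mod_cast hc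
        rw [hδ, h1]
        push_cast
        field_simp
    have hqn : ((q.toNat : ℕ) : ℝ) = q := by
      exact_mod_cast Int.toNat_of_nonneg (by omega : 0 ≤ q)
    have hinj : Function.Injective (fun m : ℕ => q.toNat * m) := by
      intro a b hab
      exact Nat.eq_of_mul_eq_mul_left (by omega : 0 < q.toNat) hab
    have hsum : HasSum (fun k : ℕ => 1 / (k : ℝ) ^ 2 *
        (if ∃ m : ℤ, (k : ℝ) * δ = m then (1 : ℝ) else 0))
        (Real.pi ^ 2 / 6 * (1 / (q : ℝ) ^ 2)) := by
      rw [← hinj.hasSum_iff]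
      · refine Eq.mp (congrArg (fun f => HasSum f _) ?_)
          (hasSum_zeta_two.mul_right (1 / (q : ℝ) ^ 2))
        funext m
        symm
        simp only [Function.comp]
        rw [if_pos ((hiff _).mpr ⟨m, rfl⟩)]
        push_cast
        rw [hqn, mul_one, mul_pow, one_div_mul_one_div, mul_comm]
      · intro k hk
        rw [if_neg, mul_zero]
        rw [hiff]
        rintro ⟨c, rfl⟩
        exact hk ⟨c, rfl⟩
    rw [hsum.tsum_eq] at h
    convert h using 2
    have := Real.pi_ne_zero
    field_simp
end
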